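/- In the poset P_k of disjoint supports on k elements, for any element {I,J} (with I, J nonempty proper disjoint subsets of [k]), the Möbius function satisfies μ(0̂, {I,J}) = (-1)^{k - |I| - |J| + 1}. -/

import Mathlib

open scoped Classical

/-- An element of the poset of disjoint supports: an unordered pair `{I,J}` of nonempty,
proper, disjoint subsets of `[k]`. -/
def IsDS {k : ℕ} (s : Sym2 (Finset (Fin k))) : Prop :=
  ∃ I J, s = s(I, J) ∧ I.Nonempty ∧ J.Nonempty ∧
    I ≠ Finset.univ ∧ J ≠ Finset.univ ∧ Disjoint I J

/-- The poset of disjoint supports on `k` elements, with `none` playing the role of `0̂`. -/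
def DS (k : ℕ) := Option {s : Sym2 (Finset (Fin k)) // IsDS s}

/-- The order on `DS k`: `0̂` is minimum, and `{R,T} ≼ {I,J}` whenever (up to relabeling)
`R ⊇ I` and `T ⊇ J`. -/
def DSle {k : ℕ} : DS k → DS k → Prop
  | none, _ => True
  | some _, none => False
  | some p, some q => ∃ R T I J, p.1 = s(R, T) ∧ q.1 = s(I, J) ∧ I ⊆ R ∧ J ⊆ T

noncomputable instance (k : ℕ) : Fintype (DS k) := by
  unfold DS; infer_instance

/-- Signed count of the disjoint pairs above `(I, J)` (componentwise). -/
lemma ds_sum_pairs {k : ℕ} (I J : Finset (Fin k)) (hd : Disjoint I J) :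
    ∑ p ∈ (Finset.univ : Finset (Finset (Fin k) × Finset (Fin k))).filter
      (fun p => I ⊆ p.1 ∧ J ⊆ p.2 ∧ Disjoint p.1 p.2),
      (-1 : ℤ) ^ (k - p.1.card - p.2.card) = 1 := by
  rw [Finset.sum_filter, Fintype.sum_prod_type]
  have inner : ∀ R : Finset (Fin k),
      (∑ T : Finset (Fin k), if I ⊆ R ∧ J ⊆ T ∧ Disjoint R T then
        (-1 : ℤ) ^ (k - R.card - T.card) else 0) = if R = Jᶜ then 1 else 0 := by
    intro R
    by_cases hR : I ⊆ R ∧ Disjoint R J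
    · obtain ⟨h1, h2⟩ := hR
      have key : (∑ T : Finset (Fin k), if I ⊆ R ∧ J ⊆ T ∧ Disjoint R T then
          (-1 : ℤ) ^ (k - R.card - T.card) else 0)
          = ∑ W ∈ ((R ∪ J)ᶜ).powerset, (-1 : ℤ) ^ W.card := by
        rw [← Finset.sum_filter]
        refine Finset.sum_bij' (fun T _ => (R ∪ T)ᶜ) (fun W _ => (R ∪ W)ᶜ) ?_ ?_ ?_ ?_ ?_
        · intro T hT
          simp only [Finset.mem_filter, Finset.mem_univ, true_and] at hT
          rw [Finset.mem_powerset, Finset.compl_subset_compl]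
          exact Finset.union_subset_union_right hT.2.1
        · intro W hW
          rw [Finset.mem_powerset] at hW
          simp only [Finset.mem_filter, Finset.mem_univ, true_and]
          refine ⟨h1, ?_, ?_⟩
          · intro x hx
            have := Finset.disjoint_right.1 h2 hx
            have h3 := @hW x
            simp at h3 ⊢
            tauto
          · rw [Finset.disjoint_left]
            intro x hx
            simp [hx]
        · intro T hT
          simp only [Finset.mem_filter, Finset.mem_univ, true_and] at hT
          ext x
          have : x ∈ R → x ∉ T := fun h => Finset.disjoint_left.1 hT.2.2 h
          simp
          tauto
        · intro W hW
          rw [Finset.mem_powerset] at hW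
          ext x
          have h3 := @hW x
          simp at h3 ⊢
          tauto
        · intro T hT
          simp only [Finset.mem_filter, Finset.mem_univ, true_and] at hT
          rw [Finset.card_compl, Finset.card_union_of_disjoint hT.2.2, Fintype.card_fin,
            Nat.sub_sub]
      rw [key, Finset.sum_powerset_neg_one_pow_card]
      congr 1
      apply propext
      rw [Finset.compl_eq_empty_iff]
      constructor
      · intro h
        ext x
        have h4 : x ∈ R ∪ J := by rw [h]; simp
        have : x ∈ R → x ∉ J := fun h => Finset.disjoint_left.1 h2 h
        simp at h4 ⊢
        tauto
      · rintro rfl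
        ext x
        simp
        tauto
    · rw [if_neg]
      · apply Finset.sum_eq_zero
        intro T _
        rw [if_neg]
        rintro ⟨a, b, c⟩
        exact hR ⟨a, c.mono_right b⟩
      · rintro rfl
        exact hR ⟨Finset.subset_compl_iff_disjoint_right.2 hd, disjoint_compl_left⟩
  rw [Finset.sum_congr rfl (fun R _ => inner R)]
  simp

/-- The minimum. -/
def dsBot (k : ℕ) : DS k := (none : Option _)

/-- A non-minimum element. -/
def dsSome {k : ℕ} (s : Sym2 (Finset (Fin k))) (h : IsDS s) : DS k :=
  (some ⟨s, h⟩ : Option {s : Sym2 (Finset (Fin k)) // IsDS s})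

lemma dsSome_inj {k : ℕ} {s t : Sym2 (Finset (Fin k))} {h : IsDS s} {h_b : IsDS t}
    (e : dsSome s h = dsSome t h_b) : s = t :=
  congrArg Subtype.val (Option.some.inj e)

lemma dsSome_ne {k : ℕ} {s : Sym2 (Finset (Fin k))} {h : IsDS s} : dsSome s h ≠ dsBot k :=
  fun e => Option.some_ne_none _ e

lemma dsSome_congr {k : ℕ} {s t : Sym2 (Finset (Fin k))} {h : IsDS s} {h_b : IsDS t}
    (e : s = t) : dsSome s h = dsSome t h_b := by
  subst e; rfl

lemma ds_cases {k : ℕ} (z : DS k) : z = dsBot k ∨ ∃ s h, z = dsSome s h := by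
  rcases z with _ | ⟨s, hs⟩
  · exact Or.inl rfl
  · exact Or.inr ⟨s, hs, rfl⟩

/-- The element of `DS k` attached to an ordered pair. -/
noncomputable def dsMk {k : ℕ} (p : Finset (Fin k) × Finset (Fin k)) : DS k :=
  if h : IsDS s(p.1, p.2) then dsSome s(p.1, p.2) h else dsBot k

lemma isDS_of {k : ℕ} {I J R T : Finset (Fin k)} (hI : I.Nonempty) (hJ : J.Nonempty)
    (h1 : I ⊆ R) (h2 : J ⊆ T) (hd : Disjoint R T) : IsDS s(R, T) := by
  refine ⟨R, T, rfl, hI.mono h1, hJ.mono h2, ?_, ?_, hd⟩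
  · rintro rfl
    obtain ⟨x, hx⟩ := hJ
    exact Finset.disjoint_left.1 hd (Finset.mem_univ x) (h2 hx)
  · rintro rfl
    obtain ⟨x, hx⟩ := hI
    exact Finset.disjoint_left.1 hd (h1 hx) (Finset.mem_univ x)

lemma IsDS.disj {k : ℕ} {R T : Finset (Fin k)} (h : IsDS s(R, T)) : Disjoint R T := by
  obtain ⟨I, J, e, -, -, -, -, hd⟩ := h
  rw [Sym2.eq_iff] at e
  rcases e with ⟨rfl, rfl⟩ | ⟨rfl, rfl⟩
  · exact hd
  · exact hd.symm

lemma ds_below {k : ℕ} (I J : Finset (Fin k)) (hI : I.Nonempty) (hJ : J.Nonempty)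
    (h : IsDS s(I, J)) :
    (Finset.univ : Finset (DS k)).filter (fun z => DSle z (dsSome s(I, J) h) ∧
      z ≠ dsSome s(I, J) h) =
    insert (dsBot k) ((((Finset.univ : Finset (Finset (Fin k) × Finset (Fin k))).filter
      (fun p => I ⊆ p.1 ∧ J ⊆ p.2 ∧ Disjoint p.1 p.2)).erase (I, J)).image dsMk) := by
  ext z
  simp only [Finset.mem_filter, Finset.mem_univ, true_and, Finset.mem_insert, Finset.mem_image,
    Finset.mem_erase]
  constructor
  · rintro ⟨hle, hne⟩
    rcases ds_cases z with rfl | ⟨s, hs, rfl⟩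
    · left; rfl
    · right
      obtain ⟨R, T, A, B, e1, e2, hA, hB⟩ := hle
      simp only at e1 e2
      subst e1
      have hdis := hs.disj
      rw [Sym2.eq_iff] at e2
      rcases e2 with ⟨rfl, rfl⟩ | ⟨rfl, rfl⟩
      · refine ⟨(R, T), ⟨?_, hA, hB, hdis⟩, ?_⟩
        · intro e
          rw [Prod.mk.injEq] at e
          obtain ⟨rfl, rfl⟩ := e
          exact hne rfl
        · exact dif_pos hs
      · refine ⟨(T, R), ⟨?_, hB, hA, hdis.symm⟩, ?_⟩
        · intro e
          rw [Prod.mk.injEq] at e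
          obtain ⟨rfl, rfl⟩ := e
          apply hne
          exact dsSome_congr Sym2.eq_swap
        · have hs_b : IsDS s(T, R) := by rw [Sym2.eq_swap]; exact hs
          refine (dif_pos hs_b).trans ?_
          exact dsSome_congr Sym2.eq_swap
  · rintro (rfl | ⟨⟨R, T⟩, ⟨hne, h1, h2, h3⟩, rfl⟩)
    · exact ⟨trivial, dsSome_ne.symm⟩
    · have hs := isDS_of hI hJ h1 h2 h3
      have e : dsMk (R, T) = dsSome s(R, T) hs := dif_pos hs
      simp only at h1 h2 h3
      rw [e]
      refine ⟨⟨R, T, I, J, rfl, rfl, h1, h2⟩, ?_⟩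
      intro e_b
      have e2 : s(R, T) = s(I, J) := dsSome_inj e_b
      rw [Sym2.eq_iff] at e2
      rcases e2 with ⟨rfl, rfl⟩ | ⟨rfl, rfl⟩
      · exact hne rfl
      · obtain ⟨x, hx⟩ := hI
        exact Finset.disjoint_left.1 h3 (h1 hx) hx

lemma ds_aux (k : ℕ) (μ : DS k → ℤ) (hμ0 : μ (dsBot k) = 1)
    (hμ : ∀ x : DS k, x ≠ dsBot k →
      μ x = -∑ z : DS k, if DSle z x ∧ z ≠ x then μ z else 0)
    (I J : Finset (Fin k)) (hI : I.Nonempty) (hJ : J.Nonempty)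
    (hd : Disjoint I J) (hs : IsDS s(I, J)) :
    μ (dsSome s(I, J) hs) = (-1) ^ (k - I.card - J.card + 1) := by
  induction hn : k - I.card - J.card using Nat.strong_induction_on generalizing I J with
  | _ n ih =>
  subst hn
  rw [hμ _ dsSome_ne, ← Finset.sum_filter, ds_below I J hI hJ hs,
    Finset.sum_insert, Finset.sum_image, hμ0]
  · have hval : ∀ p ∈ ((Finset.univ : Finset (Finset (Fin k) × Finset (Fin k))).filter
        (fun p => I ⊆ p.1 ∧ J ⊆ p.2 ∧ Disjoint p.1 p.2)).erase (I, J),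
        μ (dsMk p) = -(-1 : ℤ) ^ (k - p.1.card - p.2.card) := by
      rintro ⟨R, T⟩ hp
      simp only [Finset.mem_filter, Finset.mem_univ, true_and, Finset.mem_erase] at hp
      obtain ⟨hne, h1, h2, h3⟩ := hp
      have hRT := isDS_of hI hJ h1 h2 h3
      have e : dsMk (R, T) = dsSome s(R, T) hRT := dif_pos hRT
      have c1 := Finset.card_le_card h1
      have c2 := Finset.card_le_card h2
      have c3 : R.card + T.card ≤ k := by
        rw [← Finset.card_union_of_disjoint h3]
        simpa using Finset.card_le_univ (R ∪ T)
      have c4 : ¬ (R.card ≤ I.card ∧ T.card ≤ J.card) := by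
        rintro ⟨a, b⟩
        apply hne
        rw [Finset.eq_of_subset_of_card_le h1 a, Finset.eq_of_subset_of_card_le h2 b]
      rw [e, ih _ (by omega) R T (hI.mono h1) (hJ.mono h2) h3 hRT rfl, pow_succ]
      ring
    rw [Finset.sum_congr rfl hval, Finset.sum_neg_distrib]
    have hmem : (I, J) ∈ (Finset.univ : Finset (Finset (Fin k) × Finset (Fin k))).filter
        (fun p => I ⊆ p.1 ∧ J ⊆ p.2 ∧ Disjoint p.1 p.2) := by
      simp [hd]
    have h1 := Finset.add_sum_erase _ (fun p : Finset (Fin k) × Finset (Fin k) =>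
      (-1 : ℤ) ^ (k - p.1.card - p.2.card)) hmem
    rw [ds_sum_pairs I J hd] at h1
    simp only at h1
    rw [pow_succ]
    linarith
  · rintro ⟨R, T⟩ hp ⟨R_b, T_b⟩ hp_b e
    simp only [Finset.mem_coe, Finset.mem_filter, Finset.mem_univ, true_and,
      Finset.mem_erase] at hp hp_b
    obtain ⟨hne, h1, h2, h3⟩ := hp
    obtain ⟨hne_b, h1_b, h2_b, h3_b⟩ := hp_b
    have hRT := isDS_of hI hJ h1 h2 h3
    have hRT_b := isDS_of hI hJ h1_b h2_b h3_b
    have e1 : dsMk (R, T) = dsSome s(R, T) hRT := dif_pos hRT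
    have e2 : dsMk (R_b, T_b) = dsSome s(R_b, T_b) hRT_b := dif_pos hRT_b
    rw [e1, e2] at e
    have e3 : s(R, T) = s(R_b, T_b) := dsSome_inj e
    rw [Sym2.eq_iff] at e3
    rcases e3 with ⟨rfl, rfl⟩ | ⟨rfl, rfl⟩
    · rfl
    · obtain ⟨x, hx⟩ := hI
      exact absurd (h1_b hx) (Finset.disjoint_left.1 h3 (h1 hx))
  · intro hmem
    rw [Finset.mem_image] at hmem
    obtain ⟨⟨R, T⟩, hp, e⟩ := hmem
    simp only [Finset.mem_filter, Finset.mem_univ, true_and, Finset.mem_erase] at hp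
    obtain ⟨hne, h1, h2, h3⟩ := hp
    have hRT := isDS_of hI hJ h1 h2 h3
    have e1 : dsMk (R, T) = dsSome s(R, T) hRT := dif_pos hRT
    rw [e1] at e
    exact dsSome_ne e

/-- in the poset of disjoint supports,
`μ(0̂, {I,J}) = (-1)^(k - |I| - |J| + 1)`. -/
theorem stmt2 (k : ℕ) (μ : DS k → ℤ) (hμ0 : μ none = 1)
    (hμ : ∀ x : DS k, x ≠ none →
      μ x = -∑ z : DS k, if DSle z x ∧ z ≠ x then μ z else 0)
    (I J : Finset (Fin k)) (hI : I.Nonempty) (hJ : J.Nonempty)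
    (hIu : I ≠ Finset.univ) (hJu : J ≠ Finset.univ) (hd : Disjoint I J) :
    μ (some ⟨s(I, J), ⟨I, J, rfl, hI, hJ, hIu, hJu, hd⟩⟩) =
      (-1) ^ (k - I.card - J.card + 1) := by
  exact ds_aux k μ hμ0 hμ I J hI hJ hd _
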